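/- Let n ≥ 1, let λ : G → A be a group homomorphism, and let f : C^{gp}_{n+1}(M;ℤ)_G → A be a normalized group (n+1)-cocycle, i.e. a homomorphism with f(D^{gp}_{n+1}(M;ℤ)_G) = 0 and f ∘ ∂^{gp}_{n+2} = 0. Then both Φ_f := f ∘ ψ_n ∘ γ_n ∘ proj_n : P_n(X;ℤ)_X → A and Φ_{f,λ} := (f ⊗ id_A) ∘ ψ_{n,λ} ∘ γ_n ∘ proj_n : P_n(X;ℤ)_X → A ⊗_ℤ A vanish on D_n(X;ℤ)_X and satisfy Φ_f ∘ ∂_{n+1} = 0 and Φ_{f,λ} ∘ ∂_{n+1} = 0 on P_{n+1}(X;ℤ)_X; that is, they define n-cocycles of the G-Alexander multiple conjugation biquandle X with X-set X, i.e. cocycles of the complex C_*(X;ℤ)_X = P_*(X;ℤ)_X/D_*(X;ℤ)_X. -/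

import Mathlib

open FreeAbelianGroup
open scoped TensorProduct

namespace GAlex

variable {G M A : Type*} [Group G] [AddCommGroup M] [DistribMulAction Gᵐᵒᵖ M] [AddCommGroup A]

/-- The right action `m · g` of a group element `g : G` on `m : M`
(coming from the right `ℤ[G]`-module structure on `M`). -/
def ract (m : M) (g : G) : M := MulOpposite.op g • m

variable (φ : G →* G)

/-- The operation `(m,g) ⊳ (n,h) = (mh + n(φ(h) − h), h⁻¹gh)` of the `G`-Alexander biquandle. -/
def under (x y : M × G) : M × G :=
  (ract x.1 y.2 + ract y.1 (φ y.2) - ract y.1 y.2, y.2⁻¹ * x.2 * y.2)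

/-- The operation `(m,g) ⊚ (n,h) = (mφ(h), g)` of the `G`-Alexander biquandle. -/
def overOp (x y : M × G) : M × G := (ract x.1 (φ y.2), x.2)

/-- The face `g_{⟨p⟩}` (delete the `p`-th entry). -/
def dGdel (n : ℕ) (p : Fin (n + 1)) (g : Fin (n + 1) → G) : Fin n → G :=
  fun j => g (p.succAbove j)

/-- The face `g_{⟨⊲p⟩}` (conjugate the first entries by `g p` and delete the `p`-th entry). -/
def dGconj (n : ℕ) (p : Fin (n + 1)) (g : Fin (n + 1) → G) : Fin n → G :=
  fun j => if (j : ℕ) < (p : ℕ) then (g p)⁻¹ * g j.castSucc * g p else g j.succ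

/-- The face `m_{⟨p⟩}` (merge the two entries adjacent to position `p`;
for `p = 0` drop the first entry). -/
def dMmer (n : ℕ) (p : Fin (n + 1)) (m : Fin (n + 1) → M) : Fin n → M :=
  fun j =>
    if (j : ℕ) + 1 < (p : ℕ) then m j.castSucc
    else if (j : ℕ) + 1 = (p : ℕ) then m j.castSucc + m j.succ
    else m j.succ

/-- The face `m_{⟨⊲p⟩}`. -/
def dMconj (n : ℕ) (p : Fin (n + 1)) (g : Fin (n + 1) → G) (m : Fin (n + 1) → M) : Fin n → M :=
  fun j =>
    if (j : ℕ) + 1 < (p : ℕ) then ract (m j.castSucc) (g p)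
    else if (j : ℕ) + 1 = (p : ℕ) then ract (m j.castSucc) (g p) + ract (m j.succ) (φ (g p))
    else ract (m j.succ) (φ (g p))

/-- The boundary map `∂^{BR_U}_{n+1} : C^{BR_U}_{n+1}(X;ℤ) → C^{BR_U}_n(X;ℤ)`
(the boundary `∂^{BR_U}_k` is `0` for `k ≤ 1`, which agrees with this formula at `n = 0`). -/
def dBRU (n : ℕ) :
    FreeAbelianGroup ((Fin (n + 1) → G) × (Fin (n + 1) → M)) →+
      FreeAbelianGroup ((Fin n → G) × (Fin n → M)) :=
  FreeAbelianGroup.lift fun x =>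
    ∑ p : Fin (n + 1),
      (-1 : ℤ) ^ (p : ℕ) •
        (FreeAbelianGroup.of (dGdel n p x.1, dMmer n p x.2) -
          FreeAbelianGroup.of (dGconj n p x.1, dMconj φ n p x.1 x.2))

/-- The birack boundary map `∂^{BR}_{n+1} : C^{BR}_{n+1}(X;ℤ) → C^{BR}_n(X;ℤ)`
for the `G`-Alexander biquandle `X = M × G` (with trivial `X`-set). -/
def dBR (n : ℕ) :
    FreeAbelianGroup (Fin (n + 1) → M × G) →+ FreeAbelianGroup (Fin n → M × G) :=
  FreeAbelianGroup.lift fun x =>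
    ∑ p : Fin (n + 1),
      (-1 : ℤ) ^ (p : ℕ) •
        (FreeAbelianGroup.of (fun j => x (p.succAbove j)) -
          FreeAbelianGroup.of (fun j : Fin n =>
            if (j : ℕ) < (p : ℕ) then under φ (x j.castSucc) (x p)
            else overOp φ (x j.succ) (x p)))

/-- `γ_n((m₁,g₁),…,(m_n,g_n)) = (g₁,…,g_n; m₁−m₂, …, m_{n−1}−m_n, m_n)`. -/
def gammaMap (n : ℕ) :
    FreeAbelianGroup (Fin n → M × G) →+ FreeAbelianGroup ((Fin n → G) × (Fin n → M)) :=
  FreeAbelianGroup.lift fun x =>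
    FreeAbelianGroup.of
      (fun j => (x j).2,
       fun j => (x j).1 - if h : (j : ℕ) + 1 < n then (x ⟨(j : ℕ) + 1, h⟩).1 else 0)

/-- `r_n(g₁,…,g_n; m₁,…,m_n) = ((m₁+⋯+m_n, g₁), (m₂+⋯+m_n, g₂), …, (m_n, g_n))`. -/
def rMap (n : ℕ) :
    FreeAbelianGroup ((Fin n → G) × (Fin n → M)) →+ FreeAbelianGroup (Fin n → M × G) :=
  FreeAbelianGroup.lift fun p =>
    FreeAbelianGroup.of fun j => ((∑ i ∈ Finset.Ici j, p.2 i), p.1 j)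

/-- The boundary map `∂^{BR_U}_{d+1}` of `C^{BR_U}_*(X;ℤ)_X` (the version with `X`-set `X`,
whose degree-`d` chain group is free on `(1+d)`-tuples); it is `0` in degrees `≤ 1`. -/
def dBRUX : (d : ℕ) →
    FreeAbelianGroup ((Fin (d + 2) → G) × (Fin (d + 2) → M)) →+
      FreeAbelianGroup ((Fin (d + 1) → G) × (Fin (d + 1) → M))
  | 0 => 0
  | d + 1 =>
    FreeAbelianGroup.lift fun x =>
      ∑ i : Fin (d + 2),
        (-1 : ℤ) ^ (i : ℕ) •
          (FreeAbelianGroup.of (dGdel (d + 2) i.succ x.1, dMmer (d + 2) i.succ x.2) -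
            FreeAbelianGroup.of (dGconj (d + 2) i.succ x.1, dMconj φ (d + 2) i.succ x.1 x.2))

/-- The boundary map `∂^{BR}_{d+1}` of `C^{BR}_*(X;ℤ)_X` (the version with `X`-set `X`);
it is `0` in degrees `≤ 1`. -/
def dBRX : (d : ℕ) →
    FreeAbelianGroup (Fin (d + 2) → M × G) →+ FreeAbelianGroup (Fin (d + 1) → M × G)
  | 0 => 0
  | d + 1 =>
    FreeAbelianGroup.lift fun x =>
      ∑ i : Fin (d + 2),
        (-1 : ℤ) ^ (i : ℕ) •
          (FreeAbelianGroup.of (fun j => x (i.succ.succAbove j)) -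
            FreeAbelianGroup.of (fun j : Fin (d + 2) =>
              if (j : ℕ) < (i : ℕ) + 1 then under φ (x j.castSucc) (x i.succ)
              else overOp φ (x j.succ) (x i.succ)))


/-- The subgroup of `G`-coinvariants relations in `C^{gp}_n(M;ℤ)`:
generated by all `(m₁g,…,m_ng) − (m₁,…,m_n)`. -/
def coinvSub (n : ℕ) : AddSubgroup (FreeAbelianGroup (Fin n → M)) :=
  AddSubgroup.closure
    {z | ∃ (m : Fin n → M) (g : G),
        z = FreeAbelianGroup.of (fun i => ract (m i) g) - FreeAbelianGroup.of m}

/-- The coinvariant group chain group `C^{gp}_n(M;ℤ)_G`. -/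
abbrev CgpG (n : ℕ) : Type _ :=
  FreeAbelianGroup (Fin n → M) ⧸ coinvSub (G := G) (M := M) n

/-- The group-homology boundary map `∂^{gp}_{n+1} : C^{gp}_{n+1}(M;ℤ) → C^{gp}_n(M;ℤ)`
(it is `0` in degrees `≤ 1`, which agrees with this formula at `n = 0`). -/
def dgp (n : ℕ) :
    FreeAbelianGroup (Fin (n + 1) → M) →+ FreeAbelianGroup (Fin n → M) :=
  FreeAbelianGroup.lift fun m =>
    (∑ p : Fin (n + 1), (-1 : ℤ) ^ (p : ℕ) • FreeAbelianGroup.of (dMmer n p m)) +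
      (-1 : ℤ) ^ (n + 1) • FreeAbelianGroup.of fun j : Fin n => m j.castSucc

/-- `|k| = k₁ + ⋯ + k_n`. -/
def wt {n : ℕ} (k : Fin n → Bool) : ℕ := ∑ i, if k i then 1 else 0

/-- `g_{k,i} = φ(g₀^{k₀} ⋯ g_i^{k_i}) · g_{i+1}^{k_{i+1}} ⋯ g_{n-1}^{k_{n-1}}`
(indices written `0`-based; the products are ordered). -/
def gki {n : ℕ} (g : Fin n → G) (k : Fin n → Bool) (i : Fin n) : G :=
  φ ((((List.finRange n).filter fun j => decide (j ≤ i)).map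
        fun j => if k j then g j else 1).prod) *
    (((List.finRange n).filter fun j => decide (i < j)).map
        fun j => if k j then g j else 1).prod

/-- The value of `ψ` on a generator:
`Σ_{k, k₀ = 0} (−1)^{|k|} (m₀ g_{k,0}, …, m_n g_{k,n})`, as an element of the free
abelian group (before passing to coinvariants). -/
def psiVal (n : ℕ) (x : (Fin (n + 1) → G) × (Fin (n + 1) → M)) :
    FreeAbelianGroup (Fin (n + 1) → M) :=
  ∑ k ∈ Finset.univ.filter fun k : Fin (n + 1) → Bool => k 0 = false,
    (-1 : ℤ) ^ wt k • FreeAbelianGroup.of fun i => ract (x.2 i) (gki φ x.1 k i)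

/-- `ψ` as a homomorphism into the free abelian group (before coinvariants). -/
def psiFree (n : ℕ) :
    FreeAbelianGroup ((Fin (n + 1) → G) × (Fin (n + 1) → M)) →+
      FreeAbelianGroup (Fin (n + 1) → M) :=
  FreeAbelianGroup.lift (psiVal φ n)

/-- The homomorphism `ψ : C^{BR_U} → C^{gp}(M;ℤ)_G`. -/
def psiG (n : ℕ) :
    FreeAbelianGroup ((Fin (n + 1) → G) × (Fin (n + 1) → M)) →+
      CgpG (G := G) (M := M) (n + 1) :=
  (QuotientAddGroup.mk' (coinvSub (G := G) (M := M) (n + 1))).comp (psiFree φ n)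

/-- The homomorphism `ψ_{•,λ}`, sending a generator `x` to `ψ(x) ⊗ λ(x₁)` where `x₁` is the
first `G`-entry of `x`. -/
noncomputable def psiLam (lam : G → A) (n : ℕ) :
    FreeAbelianGroup ((Fin (n + 1) → G) × (Fin (n + 1) → M)) →+
      TensorProduct ℤ (CgpG (G := G) (M := M) (n + 1)) A :=
  FreeAbelianGroup.lift fun x =>
    (QuotientAddGroup.mk' (coinvSub (G := G) (M := M) (n + 1)) (psiVal φ n x)) ⊗ₜ[ℤ]
      lam (x.1 0)

/-- `D^{gp}_n(M;ℤ)_G`: the image in the coinvariants of the subgroup generated by tuples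
with a vanishing entry in a position `1 ≤ i ≤ n−1`. -/
def DgpGsub (n : ℕ) : AddSubgroup (CgpG (G := G) (M := M) n) :=
  (AddSubgroup.closure
      {z : FreeAbelianGroup (Fin n → M) |
        ∃ (m : Fin n → M) (i : Fin n),
          (i : ℕ) + 1 < n ∧ m i = 0 ∧ z = FreeAbelianGroup.of m}).map
    (QuotientAddGroup.mk' (coinvSub (G := G) (M := M) n))

/-! Words for the multiple conjugation biquandle complex `P_*(X;ℤ)`.
A block `⟨(m,g₁),(m,g₂),…,(m,g_s)⟩` lying in the group component `{m} × G` is encoded as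
`(m, g₁, [g₂,…,g_s]) : M × G × List G` (so blocks are automatically nonempty),
and a word is a list of blocks. -/

/-- The total length `n₁ + ⋯ + n_k` of a word. -/
def lenW (w : List (M × G × List G)) : ℕ := (w.map fun b => b.2.2.length + 1).sum

/-- Apply `⊳ x` entrywise to a block. -/
def underB (b : M × G × List G) (x : M × G) : M × G × List G :=
  (ract b.1 x.2 + ract x.1 (φ x.2) - ract x.1 x.2, x.2⁻¹ * b.2.1 * x.2,
    b.2.2.map fun g => x.2⁻¹ * g * x.2)

/-- Apply `⊚ x` entrywise to a block. -/
def overB (b : M × G × List G) (x : M × G) : M × G × List G :=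
  (ract b.1 (φ x.2), b.2.1, b.2.2)

/-- The block `⟨x₁⁻¹x₂ ⊚ x₁, …, x₁⁻¹x_s ⊚ x₁⟩` (deleted if `s = 1`). -/
def tildeB (b : M × G × List G) : List (M × G × List G) :=
  match b with
  | (_, _, []) => []
  | (m, h, g₂ :: rest) => [(ract m (φ h), h⁻¹ * g₂, rest.map fun g => h⁻¹ * g)]

/-- Make a (possibly deleted) block in the component `{m} × G` out of a list of `G`-entries. -/
def blockOfList (m : M) : List G → List (M × G × List G)
  | [] => []
  | g :: gs => [(m, g, gs)]

/-- The value of the boundary map `∂` of `P_*(X;ℤ)` on a word. -/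
def dPval (w : List (M × G × List G)) : FreeAbelianGroup (List (M × G × List G)) :=
  ∑ i ∈ (Finset.range w.length).attach,
    (fun b =>
      (-1 : ℤ) ^ lenW (w.take (i : ℕ)) •
        (FreeAbelianGroup.of
            ((w.take (i : ℕ)).map (fun c => underB φ c (b.1, b.2.1)) ++ tildeB φ b ++
              (w.drop ((i : ℕ) + 1)).map fun c => overB φ c (b.1, b.2.1)) +
          ∑ j ∈ Finset.range (b.2.2.length + 1),
            (-1 : ℤ) ^ (j + 1) •
              FreeAbelianGroup.of
                (w.take (i : ℕ) ++ blockOfList b.1 ((b.2.1 :: b.2.2).eraseIdx j) ++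
                  w.drop ((i : ℕ) + 1))))
      (w[(i : ℕ)]'(Finset.mem_range.mp i.2))

/-- The boundary map `∂` of the complex `P_*(X;ℤ)` (all degrees at once). -/
def dP : FreeAbelianGroup (List (M × G × List G)) →+
    FreeAbelianGroup (List (M × G × List G)) :=
  FreeAbelianGroup.lift (dPval φ)

/-- `⌊j;μ⌋`, where the strictly increasing map `μ` is encoded by the subset `T` of positions
taken from the first block: the number of elements of `T` that are `≤ j`. -/
def cntT {N : ℕ} (T : Finset (Fin N)) (j : ℕ) : ℕ := (T.filter fun p : Fin N => (p : ℕ) ≤ j).card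

/-- `1`-based lookup in a list of group elements, with `a₀ = 1`. -/
def idxL (l : List G) (i : ℕ) : G := if i = 0 then 1 else l.getD (i - 1) 1

/-- The entry `a_{⌊j;μ⌋} b_{j−⌊j;μ⌋}` (at `0`-based position `j`) of `⟨⟨a⟩⟨b⟩⟩_μ`. -/
def mergeEntry (la lb : List G) (T : Finset (Fin (la.length + lb.length))) (j : ℕ) : G :=
  idxL la (cntT T j) * idxL lb (j + 1 - cntT T j)

/-- The element `⟨x₁⟩⋯⟨⟨a⟩⟨b⟩⟩⋯⟨x_k⟩ = Σ_μ (−1)^{Σ(μ(k)−k)} ⟨…⟩`, where the two merged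
blocks lie in the component `{m} × G`, `w₁` is the prefix and `w₂` the suffix of the word. -/
def mergeExpand (m : M) (la lb : List G) (w₁ w₂ : List (M × G × List G)) :
    FreeAbelianGroup (List (M × G × List G)) :=
  ∑ T ∈ Finset.univ.filter
      fun T : Finset (Fin (la.length + lb.length)) => T.card = la.length,
    (-1 : ℤ) ^ ((∑ p ∈ T, (p : ℕ)) + ∑ kk ∈ Finset.range la.length, kk) •
      FreeAbelianGroup.of
        (w₁ ++ (m, mergeEntry la lb T 0,
            (List.range (la.length + lb.length - 1)).map
              fun j => mergeEntry la lb T (j + 1)) :: w₂)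

/-- `D_n(X;ℤ)`: the subgroup of `P_n(X;ℤ)` generated by
`⟨x₁⟩⋯⟨a⟩⟨b⟩⋯⟨x_k⟩ − ⟨x₁⟩⋯⟨⟨a⟩⟨b⟩⟩⋯⟨x_k⟩` for consecutive blocks in a common component. -/
def Dsub (n : ℕ) : AddSubgroup (FreeAbelianGroup (List (M × G × List G))) :=
  AddSubgroup.closure
    {z | ∃ (w₁ w₂ : List (M × G × List G)) (m : M) (g : G) (gs : List G) (h : G) (hs : List G),
      lenW (w₁ ++ (m, g, gs) :: (m, h, hs) :: w₂) = n ∧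
      z = FreeAbelianGroup.of (w₁ ++ (m, g, gs) :: (m, h, hs) :: w₂) -
          mergeExpand m (g :: gs) (h :: hs) w₁ w₂}

/-- `P_n(X;ℤ)` as the subgroup generated by the words of total length `n`. -/
def Psub (n : ℕ) : AddSubgroup (FreeAbelianGroup (List (M × G × List G))) :=
  AddSubgroup.closure
    {z | ∃ w : List (M × G × List G), lenW w = n ∧ z = FreeAbelianGroup.of w}

/-- `proj_n`, sending a word all of whose blocks are singletons (necessarily `n` of them)
to the corresponding `n`-tuple, and every other word to `0`. -/
def projP (n : ℕ) :
    FreeAbelianGroup (List (M × G × List G)) →+ FreeAbelianGroup (Fin n → M × G) :=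
  FreeAbelianGroup.lift fun w =>
    if h : w.length = n ∧ ∀ b ∈ w, b.2.2.isEmpty = true then
      FreeAbelianGroup.of fun i : Fin n =>
        ((w[(i : ℕ)]'(h.1.symm ▸ i.2)).1, (w[(i : ℕ)]'(h.1.symm ▸ i.2)).2.1)
    else 0

/-! The `X`-set versions of the word complex: a generator of `P_n(X;ℤ)_X` is a pair
`(x₀, w)` of an element `x₀ ∈ X` and a word `w` of total length `n`. -/

/-- The value of the boundary map `∂` of `P_*(X;ℤ)_X` on a generator `(x₀, w)`. -/
def dPXval (z : (M × G) × List (M × G × List G)) :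
    FreeAbelianGroup ((M × G) × List (M × G × List G)) :=
  ∑ i ∈ (Finset.range z.2.length).attach,
    (fun b =>
      (-1 : ℤ) ^ lenW (z.2.take (i : ℕ)) •
        (FreeAbelianGroup.of
            (under φ z.1 (b.1, b.2.1),
              (z.2.take (i : ℕ)).map (fun c => underB φ c (b.1, b.2.1)) ++ tildeB φ b ++
                (z.2.drop ((i : ℕ) + 1)).map fun c => overB φ c (b.1, b.2.1)) +
          ∑ j ∈ Finset.range (b.2.2.length + 1),
            (-1 : ℤ) ^ (j + 1) •
              FreeAbelianGroup.of
                (z.1, z.2.take (i : ℕ) ++ blockOfList b.1 ((b.2.1 :: b.2.2).eraseIdx j) ++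
                  z.2.drop ((i : ℕ) + 1))))
      (z.2[(i : ℕ)]'(Finset.mem_range.mp i.2))

/-- The boundary map `∂` of `P_*(X;ℤ)_X` (all degrees at once). -/
def dPX : FreeAbelianGroup ((M × G) × List (M × G × List G)) →+
    FreeAbelianGroup ((M × G) × List (M × G × List G)) :=
  FreeAbelianGroup.lift (dPXval φ)

/-- The element `⟨x₀⟩⟨x₁⟩⋯⟨⟨a⟩⟨b⟩⟩⋯⟨x_k⟩` in the `X`-set word complex. -/
def mergeExpandX (x₀ : M × G) (m : M) (la lb : List G) (w₁ w₂ : List (M × G × List G)) :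
    FreeAbelianGroup ((M × G) × List (M × G × List G)) :=
  ∑ T ∈ Finset.univ.filter
      fun T : Finset (Fin (la.length + lb.length)) => T.card = la.length,
    (-1 : ℤ) ^ ((∑ p ∈ T, (p : ℕ)) + ∑ kk ∈ Finset.range la.length, kk) •
      FreeAbelianGroup.of
        (x₀, w₁ ++ (m, mergeEntry la lb T 0,
            (List.range (la.length + lb.length - 1)).map
              fun j => mergeEntry la lb T (j + 1)) :: w₂)

/-- `D_n(X;ℤ)_X`. -/
def DsubX (n : ℕ) : AddSubgroup (FreeAbelianGroup ((M × G) × List (M × G × List G))) :=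
  AddSubgroup.closure
    {z | ∃ (x₀ : M × G) (w₁ w₂ : List (M × G × List G)) (m : M) (g : G) (gs : List G)
        (h : G) (hs : List G),
      lenW (w₁ ++ (m, g, gs) :: (m, h, hs) :: w₂) = n ∧
      z = FreeAbelianGroup.of (x₀, w₁ ++ (m, g, gs) :: (m, h, hs) :: w₂) -
          mergeExpandX x₀ m (g :: gs) (h :: hs) w₁ w₂}

/-- `P_n(X;ℤ)_X` as the subgroup generated by the generators of total length `n`. -/
def PsubX (n : ℕ) : AddSubgroup (FreeAbelianGroup ((M × G) × List (M × G × List G))) :=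
  AddSubgroup.closure
    {z | ∃ p : (M × G) × List (M × G × List G), lenW p.2 = n ∧ z = FreeAbelianGroup.of p}

/-- `proj_n` for the `X`-set word complex: `⟨x₀⟩⟨x₁⟩⋯⟨x_n⟩ ↦ (x₀, x₁, …, x_n)` on generators
all of whose blocks are singletons, `0` otherwise. -/
def projX (n : ℕ) :
    FreeAbelianGroup ((M × G) × List (M × G × List G)) →+
      FreeAbelianGroup (Fin (n + 1) → M × G) :=
  FreeAbelianGroup.lift fun z =>
    if h : z.2.length = n ∧ ∀ b ∈ z.2, b.2.2.isEmpty = true then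
      FreeAbelianGroup.of
        (Fin.cons z.1 fun i : Fin n =>
          ((z.2[(i : ℕ)]'(h.1.symm ▸ i.2)).1, (z.2[(i : ℕ)]'(h.1.symm ▸ i.2)).2.1))
    else 0

/-- `Φ_f = f ∘ ψ_n ∘ γ_n ∘ proj_n : P_n(X;ℤ)_X → A` (the Lean parameter `n` corresponds to
the paper's degree `n+1 ≥ 1`). -/
def PhiFX (n : ℕ) (f : CgpG (G := G) (M := M) (n + 2) →+ A) :
    FreeAbelianGroup ((M × G) × List (M × G × List G)) →+ A :=
  (f.comp (psiG φ (n + 1))).comp ((gammaMap (n + 2)).comp (projX (n + 1)))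

/-- `Φ_{f,λ} = (f ⊗ id_A) ∘ ψ_{n,λ} ∘ γ_n ∘ proj_n : P_n(X;ℤ)_X → A ⊗_ℤ A`. -/
noncomputable def PhiFLamX (lam : G → A) (n : ℕ)
    (f : CgpG (G := G) (M := M) (n + 2) →+ A) :
    FreeAbelianGroup ((M × G) × List (M × G × List G)) →+ TensorProduct ℤ A A :=
  ((TensorProduct.map f.toIntLinearMap (LinearMap.id : A →ₗ[ℤ] A)).toAddMonoidHom.comp
      (psiLam φ lam (n + 1))).comp ((gammaMap (n + 2)).comp (projX (n + 1)))

/-! ### Auxiliary list-based description -/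

theorem ract_ract (m : M) (g h : G) : ract (ract m g) h = ract m (g * h) := by
  simp [ract, mul_smul]

theorem ract_one (m : M) : ract m (1 : G) = m := by simp [ract]

theorem ract_add (m n : M) (g : G) : ract (m + n) g = ract m g + ract n g := by simp [ract]

theorem ract_sub (m n : M) (g : G) : ract (m - n) g = ract m g - ract n g := by
  simp [ract, smul_sub]

theorem ract_zero (g : G) : ract (0 : M) g = 0 := by simp [ract]

/-- Act on the module entry. -/
def actP (a : G) (x : M × Option G) : M × Option G := (ract x.1 a, x.2)

/-- Act on the module entry and conjugate the group entry. -/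
def cjO (g : G) (x : M × Option G) : M × Option G :=
  (ract x.1 g, x.2.map fun h => g⁻¹ * h * g)

/-- The cube sum. -/
def TT (f : List M → A) : List M → List (M × Option G) → A
  | done, [] => f done
  | done, (d, none) :: L => TT f (done ++ [d]) L
  | done, (d, some g) :: L => TT f (done ++ [d]) L -
      TT f (done.map (fun x => ract x g) ++ [ract d (φ g)]) (L.map (actP (φ g)))
  termination_by _ L => L.length

theorem TT_nil (f : List M → A) (done : List M) : TT φ f done [] = f done := by
  rw [TT]

theorem TT_none (f : List M → A) (done : List M) (d : M) (L : List (M × Option G)) :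
    TT φ f done ((d, none) :: L) = TT φ f (done ++ [d]) L := by
  rw [TT]

theorem TT_some (f : List M → A) (done : List M) (d : M) (g : G) (L : List (M × Option G)) :
    TT φ f done ((d, some g) :: L) = TT φ f (done ++ [d]) L -
      TT φ f (done.map (fun x => ract x g) ++ [ract d (φ g)]) (L.map (actP (φ g))) := by
  rw [TT]

theorem indL {G M : Type*} {P : List (M × Option G) → Prop} (h0 : P [])
    (h1 : ∀ d L, P L → P ((d, none) :: L))
    (h2 : ∀ d g L, P L → (∀ F : M × Option G → M × Option G, P (L.map F)) →
      P ((d, some g) :: L)) : ∀ L, P L := by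
  have key : ∀ n : ℕ, ∀ L : List (M × Option G), L.length = n → P L := by
    intro n
    induction n with
    | zero => intro L hL; rw [List.length_eq_zero_iff] at hL; subst hL; exact h0
    | succ n ih =>
      rintro (_ | ⟨⟨d, _ | g⟩, L⟩) hL
      · simp at hL
      · exact h1 _ _ (ih _ (by simpa using hL))
      · exact h2 _ _ _ (ih _ (by simpa using hL)) (fun F => ih _ (by simpa using hL))
  intro L
  exact key _ L rfl

theorem TT_congr (f f' : List M → A) (L : List (M × Option G)) : ∀ done : List M,
    (∀ X : List M, X.length = done.length + L.length → f X = f' X) →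
    TT φ f done L = TT φ f' done L := by
  induction L using indL with
  | h0 => intro done h; simp only [TT_nil]; exact h _ (by simp)
  | h1 d L ih =>
    intro done h; simp only [TT_none]
    exact ih _ (fun X hX => h X (by simp at hX ⊢; omega))
  | h2 d g L ih1 ih2 =>
    intro done h; simp only [TT_some]
    rw [ih1 _ (fun X hX => h X (by simp at hX ⊢; omega)),
      ih2 _ _ (fun X hX => h X (by simp at hX ⊢; omega))]

theorem TT_zero (L : List (M × Option G)) : ∀ done : List M,
    TT φ (fun _ => (0 : A)) done L = 0 := by
  induction L using indL with
  | h0 => intro done; simp only [TT_nil]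
  | h1 d L ih => intro done; simp only [TT_none, ih]
  | h2 d g L ih1 ih2 => intro done; simp only [TT_some, ih1, ih2, sub_zero]

theorem TT_add (f f' : List M → A) (L : List (M × Option G)) : ∀ done : List M,
    TT φ (fun X => f X + f' X) done L = TT φ f done L + TT φ f' done L := by
  induction L using indL with
  | h0 => intro done; simp only [TT_nil]
  | h1 d L ih => intro done; simp only [TT_none, ih]
  | h2 d g L ih1 ih2 => intro done; simp only [TT_some, ih1, ih2]; abel

theorem TT_smul (c : ℤ) (f : List M → A) (L : List (M × Option G)) : ∀ done : List M,
    TT φ (fun X => c • f X) done L = c • TT φ f done L := by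
  induction L using indL with
  | h0 => intro done; simp only [TT_nil]
  | h1 d L ih => intro done; simp only [TT_none, ih]
  | h2 d g L ih1 ih2 => intro done; simp only [TT_some, ih1, ih2, smul_sub]

theorem TT_sum {ι : Type*} (s : Finset ι) (f : ι → List M → A) (L : List (M × Option G))
    (done : List M) :
    TT φ (fun X => ∑ i ∈ s, f i X) done L = ∑ i ∈ s, TT φ (f i) done L := by
  classical
  induction s using Finset.induction_on with
  | empty => simp [TT_zero]
  | insert a s ha ih => simp only [Finset.sum_insert ha, TT_add, ih]

theorem phi_conj (hφ : ∀ g : G, φ g ∈ Subgroup.center G) (g h : G) :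
    φ (g⁻¹ * h * g) = φ h := by
  have := (Subgroup.mem_center_iff.mp (hφ h)) (φ g)
  simp only [map_mul, map_inv]
  rw [mul_assoc, ← this]; group

theorem phi_comm (hφ : ∀ g : G, φ g ∈ Subgroup.center G) (g h : G) :
    h * φ g = φ g * h := (Subgroup.mem_center_iff.mp (hφ g)) h

theorem cjO_actP (hφ : ∀ g : G, φ g ∈ Subgroup.center G) (g h : G) :
    (cjO g ∘ actP (φ h) : M × Option G → M × Option G) = actP (φ h) ∘ cjO g := by
  funext x
  simp [cjO, actP, ract_ract, phi_comm φ hφ]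

theorem actP_comm (hφ : ∀ g : G, φ g ∈ Subgroup.center G) (a : G) (h : G) :
    (actP a ∘ actP (φ h) : M × Option G → M × Option G) = actP (φ h) ∘ actP a := by
  funext x
  simp [actP, ract_ract, phi_comm φ hφ]

/-- Splitting the cube sum in one direction. -/
theorem TT_split (hφ : ∀ g : G, φ g ∈ Subgroup.center G) (f : List M → A) (g : G)
    (L1 : List (M × Option G)) : ∀ (L2 : List (M × Option G)) (d : M) (done : List M),
    TT φ f done (L1 ++ (d, some g) :: L2) = TT φ f done (L1 ++ (d, none) :: L2) -
      TT φ f (done.map (fun x => ract x g))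
        (L1.map (cjO g) ++ (ract d (φ g), none) :: L2.map (actP (φ g))) := by
  induction L1 using indL with
  | h0 => intro L2 d done; simp only [List.nil_append, List.map_nil, TT_some, TT_none]
  | h1 e L ih =>
    intro L2 d done
    simp only [List.cons_append, TT_none, List.map_cons, ih, List.map_append, List.map_nil]
    simp [cjO, TT_none]
  | h2 e h L ih1 ih2 =>
    intro L2 d done
    have e1 : cjO g (e, some h) = (ract e g, some (g⁻¹ * h * g)) := rfl
    have e2 : ∀ o, actP (φ h) (d, o) = (ract d (φ h), o) := fun _ => rfl
    have e3 : ∀ o, actP (φ h) (ract d (φ g), o) = (ract d (φ g * φ h), o) := fun _ => by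
      simp [actP, ract_ract]
    simp only [List.cons_append, TT_some, List.map_cons, List.map_append, e1, ih1, e2, ih2,
      List.map_nil, List.map_map, phi_conj φ hφ, ract_ract, e3,
      Function.comp_def]
    have e4 : g * (g⁻¹ * h * g) = h * g := by group
    rw [phi_comm φ hφ h g, phi_comm φ hφ h (φ g)]
    simp only [e4]
    have e6 := cjO_actP (M := M) φ hφ g h
    have e7 := actP_comm (M := M) φ hφ (φ g) h
    simp only [Function.comp_def] at e6 e7
    rw [e6, e7]
    abel

/-- Merge the entries in positions `p` and `p + 1`. -/
def mergeL {M : Type*} [AddCommGroup M] : ℕ → List M → List M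
  | 0, a :: b :: l => (a + b) :: l
  | p + 1, a :: l => a :: mergeL p l
  | _, l => l

theorem mergeL_append {M : Type*} [AddCommGroup M] (D1 D2 : List M) (a b : M) :
    mergeL D1.length (D1 ++ a :: b :: D2) = D1 ++ (a + b) :: D2 := by
  induction D1 with
  | nil => simp [mergeL]
  | cons c D ih => simp [mergeL, ih]

theorem TT_merge_done (f : List M → A) (p : ℕ) (L : List (M × Option G)) :
    ∀ (D1 D2 : List M) (a b : M), D1.length = p →
    TT φ (fun X => f (mergeL p X)) (D1 ++ a :: b :: D2) L = TT φ f (D1 ++ (a + b) :: D2) L := by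
  induction L using indL with
  | h0 => intro D1 D2 a b h; subst h; simp only [TT_nil, mergeL_append]
  | h1 d L ih =>
    intro D1 D2 a b h
    have := ih D1 (D2 ++ [d]) a b h
    simpa [TT_none] using this
  | h2 d g L ih1 ih2 =>
    intro D1 D2 a b h
    have e1 := ih1 D1 (D2 ++ [d]) a b h
    have e2 := ih2 (actP (φ g)) (D1.map (fun x => ract x g))
      (D2.map (fun x => ract x g) ++ [ract d (φ g)]) (ract a g) (ract b g) (by simpa using h)
    simp only [TT_some, List.map_append, List.map_cons, List.append_assoc, List.cons_append,
      ract_add, e1, e2]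

theorem TT_merge (f : List M → A) (L1 : List (M × Option G)) :
    ∀ (p : ℕ) (done : List M) (L2 : List (M × Option G)) (d' d : M) (o : Option G),
    done.length + L1.length = p →
    TT φ (fun X => f (mergeL p X)) done (L1 ++ (d', o) :: (d, none) :: L2) =
      TT φ f done (L1 ++ (d' + d, o) :: L2) := by
  induction L1 using indL with
  | h0 =>
    intro p done L2 d' d o h
    rcases o with _ | g
    · simp only [List.nil_append, TT_none]
      have := TT_merge_done φ f p L2 done [] d' d (by simpa using h)
      simpa using this
    · simp only [List.nil_append, TT_some, TT_none, List.map_cons, actP]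
      have e1 := TT_merge_done φ f p L2 done [] d' d (by simpa using h)
      have e2 := TT_merge_done φ f p (L2.map (actP (φ g))) (done.map (fun x => ract x g)) []
        (ract d' (φ g)) (ract d (φ g)) (by simpa using h)
      rw [← ract_add] at e2
      simp only [List.append_assoc, List.cons_append, List.nil_append]
      erw [e1, e2]
  | h1 e L ih =>
    intro p done L2 d' d o h
    simp only [List.cons_append, TT_none]
    exact ih p _ L2 d' d o (by simp at h ⊢; omega)
  | h2 e g L ih1 ih2 =>
    intro p done L2 d' d o h
    simp only [List.cons_append, TT_some, List.map_append, List.map_cons]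
    rw [ih1 p _ L2 d' d o (by simp at h ⊢; omega)]
    have := ih2 (actP (φ g)) p (done.map (fun x => ract x g) ++ [ract e (φ g)])
      (L2.map (actP (φ g))) (ract d' (φ g)) (ract d (φ g)) o (by simp at h ⊢; omega)
    rw [← ract_add] at this
    simp only [actP] at this ⊢
    rw [this]

theorem TT_tail (f : List M → A) (L : List (M × Option G)) : ∀ (a : M) (done : List M),
    TT φ (fun X => f X.tail) (a :: done) L = TT φ f done L := by
  induction L using indL with
  | h0 => intro a done; simp only [TT_nil, List.tail_cons]
  | h1 d L ih => intro a done; simp only [TT_none, List.cons_append, ih]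
  | h2 d g L ih1 ih2 =>
    intro a done; simp only [TT_some, List.cons_append, List.map_cons, ih1, ih2]

theorem TT_dropLast (f : List M → A) (L : List (M × Option G)) :
    ∀ (e : M) (done : List M),
    TT φ (fun X => f X.dropLast) done (L ++ [(e, none)]) = TT φ f done L := by
  induction L using indL with
  | h0 => intro e done; simp [TT_nil, TT_none]
  | h1 d L ih => intro e done; simp only [TT_none, List.cons_append, ih]
  | h2 d g L ih1 ih2 =>
    intro e done
    have := ih2 (actP (φ g)) (ract e (φ g))
    simp only [TT_some, List.cons_append, List.map_cons, List.map_append, List.map_nil, ih1]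
    simp only [actP] at this ⊢
    rw [this]

theorem TT_inv_act (hφ : ∀ g : G, φ g ∈ Subgroup.center G) (f : List M → A)
    (hf : ∀ (g : G) X, f (X.map (fun x => ract x g)) = f X) (a : G)
    (L : List (M × Option G)) : ∀ (done : List M),
    TT φ f (done.map (fun x => ract x (φ a))) (L.map (actP (φ a))) = TT φ f done L := by
  induction L using indL with
  | h0 => intro done; simp only [TT_nil, List.map_nil, hf]
  | h1 d L ih =>
    intro done
    have := ih (done ++ [d])
    simpa [actP, TT_none] using this
  | h2 d g L ih1 ih2 =>
    intro done
    have e1 := ih1 (done ++ [d])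
    have e2 := ih2 (actP (φ g)) (done.map (fun x => ract x g) ++ [ract d (φ g)])
    have e0 : actP (φ a) (d, some g) = (ract d (φ a), some g) := rfl
    rw [TT_some, ← e1, ← e2]
    simp only [List.map_cons, e0, TT_some, List.map_append, List.map_map, List.map_nil]
    rw [actP_comm φ hφ]
    simp only [Function.comp_def, ract_ract, phi_comm φ hφ a g, phi_comm φ hφ a (φ g)]

theorem TT_inv_cj (hφ : ∀ g : G, φ g ∈ Subgroup.center G) (f : List M → A)
    (hf : ∀ (g : G) X, f (X.map (fun x => ract x g)) = f X) (a : G)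
    (L : List (M × Option G)) : ∀ (done : List M),
    TT φ f (done.map (fun x => ract x a)) (L.map (cjO a)) = TT φ f done L := by
  induction L using indL with
  | h0 => intro done; simp only [TT_nil, List.map_nil, hf]
  | h1 d L ih =>
    intro done
    have := ih (done ++ [d])
    simpa [cjO, TT_none] using this
  | h2 d g L ih1 ih2 =>
    intro done
    have e1 := ih1 (done ++ [d])
    have e2 := ih2 (actP (φ g)) (done.map (fun x => ract x g) ++ [ract d (φ g)])
    have e0 : cjO a (d, some g) = (ract d a, some (a⁻¹ * g * a)) := rfl
    rw [TT_some, ← e1, ← e2]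
    simp only [List.map_cons, e0, TT_some, List.map_append, List.map_map, List.map_nil,
      phi_conj φ hφ]
    rw [cjO_actP φ hφ]
    have e4 : a * (a⁻¹ * g * a) = g * a := by group
    simp only [Function.comp_def, ract_ract, phi_comm φ hφ g a, e4]

/-- First module entry with default. -/
def hdm {G M : Type*} : List (M × Option G) → M → M
  | [], e => e
  | x :: _, _ => x.1

theorem hdm_nil {G M : Type*} (e : M) : hdm ([] : List (M × Option G)) e = e := rfl

theorem hdm_cons {G M : Type*} (x : M × Option G) (l : List (M × Option G)) (e : M) :
    hdm (x :: l) e = x.1 := rfl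

/-- Consecutive differences, with final value `e`. -/
def dlm {G M : Type*} [AddCommGroup M] : List (M × Option G) → M → List (M × Option G)
  | [], _ => []
  | x :: l, e => (x.1 - hdm l e, x.2) :: dlm l e

theorem dlm_append {G M : Type*} [AddCommGroup M] (l1 l2 : List (M × Option G)) (e : M) :
    dlm (l1 ++ l2) e = dlm l1 (hdm l2 e) ++ dlm l2 e := by
  induction l1 with
  | nil => simp [dlm]
  | cons x l ih => cases l <;> simp_all [dlm, hdm_nil, hdm_cons]

theorem length_dlm {G M : Type*} [AddCommGroup M] (l : List (M × Option G)) (e : M) : (dlm l e).length = l.length := by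
  induction l with
  | nil => rfl
  | cons x l ih => simp [dlm, ih]

/-- `⊳` on entries. -/
def underO (m : M) (g : G) (x : M × Option G) : M × Option G :=
  (ract x.1 g + ract m (φ g) - ract m g, x.2.map fun h => g⁻¹ * h * g)

theorem dlm_under (m : M) (g : G) (l : List (M × Option G)) :
    dlm (l.map (underO φ m g)) (ract m (φ g)) = (dlm l m).map (cjO g) := by
  induction l with
  | nil => rfl
  | cons x l ih =>
    cases l <;> simp_all [dlm, hdm_nil, hdm_cons, cjO, underO, ract_sub]
    abel

theorem dlm_act (a : G) (l : List (M × Option G)) (e : M) :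
    dlm (l.map (actP a)) (ract e a) = (dlm l e).map (actP a) := by
  induction l with
  | nil => rfl
  | cons x l ih =>
    cases l <;> simp_all [dlm, hdm_nil, hdm_cons, actP, ract_sub]

theorem hdm_act (a : G) (l : List (M × Option G)) (e : M) :
    hdm (l.map (actP a)) (ract e a) = ract (hdm l e) a := by
  cases l <;> simp [hdm, actP]

/-- The evaluation of the cocycle on a list. -/
def BB (f : List M → A) (l : List (M × Option G)) : A := TT φ f [] (dlm l 0)

theorem BB_merge (hφ : ∀ g : G, φ g ∈ Subgroup.center G) (f : List M → A)
    (l1 l2 : List (M × Option G)) (m' m : M) (o : Option G) (g : G) :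
    BB φ (fun X => f (mergeL l1.length X)) (l1 ++ (m', o) :: (m, some g) :: l2) =
      BB φ f (l1 ++ (m', o) :: l2) -
      BB φ f ((l1 ++ [(m', o)]).map (underO φ m g) ++ l2.map (actP (φ g))) := by
  have h0 := hdm_act (φ g) l2 0
  have h1 := dlm_act (φ g) l2 0
  rw [ract_zero] at h0 h1
  have h2 := dlm_under φ m g (l1 ++ [(m', o)])
  have e1 : dlm (l1 ++ (m', o) :: (m, some g) :: l2) 0 =
    (dlm l1 m' ++ [(m' - m, o)]) ++ (m - hdm l2 0, some g) :: dlm l2 0 := by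
    rw [dlm_append]; simp [dlm, hdm_nil, hdm_cons]
  have e2 : dlm (l1 ++ (m', o) :: l2) 0 = dlm l1 m' ++ (m' - hdm l2 0, o) :: dlm l2 0 := by
    rw [dlm_append]; simp [dlm, hdm_nil, hdm_cons]
  have e3 : dlm ((l1 ++ [(m', o)]).map (underO φ m g) ++ l2.map (actP (φ g))) 0 =
      (dlm l1 m').map (cjO g) ++ (ract (m' - m) g + ract (m - hdm l2 0) (φ g),
        o.map fun h => g⁻¹ * h * g) :: (dlm l2 0).map (actP (φ g)) := by
    rw [dlm_append, h1, h0]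
    simp only [List.map_append, List.map_cons, List.map_nil, dlm_append] at h2 ⊢
    simp only [dlm, hdm_nil, hdm_cons, List.map_append, List.map_cons, List.map_nil] at h2 ⊢
    have := (List.append_inj h2 (by simp [length_dlm])).1
    rw [this]
    simp only [underO, ract_sub, List.append_assoc, List.cons_append, List.nil_append]
    congr 3
    abel
  unfold BB
  rw [e1, e2, e3, TT_split φ hφ]
  simp only [List.append_assoc, List.map_append, List.cons_append, List.nil_append, List.map_nil,
    List.map_cons, cjO]
  rw [TT_merge φ f _ _ _ _ _ _ _ (by simp [length_dlm]),
    TT_merge φ f _ _ _ _ _ _ _ (by simp [length_dlm])]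
  simp

theorem BB_tail (hφ : ∀ g : G, φ g ∈ Subgroup.center G) (f : List M → A)
    (hf : ∀ (g : G) X, f (X.map (fun x => ract x g)) = f X)
    (l : List (M × Option G)) (m' m : M) (g : G) :
    BB φ (fun X => f X.tail) ((m', none) :: (m, some g) :: l) = 0 := by
  unfold BB
  simp only [dlm, TT_none, TT_some, List.nil_append, List.cons_append, List.map_cons,
    List.map_nil, TT_tail]
  have := TT_inv_act φ hφ f hf g (dlm l 0) [m - hdm l 0]
  simp only [List.map_cons, List.map_nil] at this
  rw [this, sub_self]

theorem BB_dropLast (hφ : ∀ g : G, φ g ∈ Subgroup.center G) (f : List M → A)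
    (hf : ∀ (g : G) X, f (X.map (fun x => ract x g)) = f X)
    (l : List (M × Option G)) (m : M) (g : G) :
    BB φ (fun X => f X.dropLast) (l ++ [(m, some g)]) = 0 := by
  unfold BB
  rw [dlm_append]
  simp only [dlm, hdm_nil, hdm_cons]
  rw [TT_split φ hφ]
  simp only [List.map_nil, TT_dropLast]
  have := TT_inv_cj φ hφ f hf g (dlm l m) []
  simp only [List.map_nil] at this
  rw [this, sub_self]

theorem BB_double (hφ : ∀ g : G, φ g ∈ Subgroup.center G) (f : List M → A)
    (l1 l2 : List (M × Option G)) (m : M) (g h : G) :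
    BB φ f (l1.map (underO φ m g) ++ (ract m (φ g), some (g⁻¹ * h)) :: l2.map (actP (φ g))) -
      BB φ f (l1 ++ (m, some h) :: l2) + BB φ f (l1 ++ (m, some g) :: l2) = 0 := by
  have h0 := hdm_act (φ g) l2 0
  have h1 := dlm_act (φ g) l2 0
  rw [ract_zero] at h0 h1
  unfold BB
  simp only [dlm_append, dlm, hdm_nil, hdm_cons]
  rw [h0, h1, dlm_under, ← ract_sub, TT_split φ hφ, TT_split φ hφ f h, TT_split φ hφ f g]
  have e1 : (cjO (g⁻¹ * h) ∘ cjO g : M × Option G → M × Option G) = cjO h := by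
    funext x; rcases x with ⟨x, _ | k⟩ <;> simp [cjO, ract_ract, mul_assoc]
  have e2 : (actP (φ (g⁻¹ * h)) ∘ actP (φ g) : M × Option G → M × Option G) = actP (φ h) := by
    funext x; simp [actP, ract_ract]
  have e3 : φ g * φ (g⁻¹ * h) = φ h := by simp
  simp only [List.map_map, e1, e2, List.map_nil, ract_ract, e3]
  abel

/-- Ordered product. -/
def PP {n : ℕ} (g : Fin n → G) (k : Fin n → Bool) : G :=
  ((List.finRange n).map fun j => if k j then g j else 1).prod

theorem PP_cons {n : ℕ} (g : Fin (n + 1) → G) (b : Bool) (k : Fin n → Bool) :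
    PP g (Fin.cons b k : Fin (n + 1) → Bool) =
      (if b then g 0 else 1) * PP (fun i => g i.succ) k := by
  simp [PP, List.finRange_succ, Function.comp_def]

theorem gki_cons_zero {n : ℕ} (g : Fin (n + 1) → G) (b : Bool) (k : Fin n → Bool) :
    gki φ g (Fin.cons b k : Fin (n + 1) → Bool) 0 =
      φ (if b then g 0 else 1) * PP (fun i => g i.succ) k := by
  simp [gki, PP, List.finRange_succ, Function.comp_def, List.filter_map]

theorem gki_cons_succ {n : ℕ} (g : Fin (n + 1) → G) (b : Bool) (k : Fin n → Bool) (i : Fin n) :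
    gki φ g (Fin.cons b k : Fin (n + 1) → Bool) i.succ =
      φ (if b then g 0 else 1) * gki φ (fun i => g i.succ) k i := by
  cases b <;> simp [gki, List.finRange_succ, Function.comp_def, List.filter_map, mul_assoc]

theorem wt_cons {n : ℕ} (b : Bool) (k : Fin n → Bool) :
    wt (Fin.cons b k : Fin (n + 1) → Bool) = (if b then 1 else 0) + wt k := by
  simp only [wt, Fin.sum_univ_succ, Fin.cons_zero, Fin.cons_succ]

theorem sum_cons {n : ℕ} (F : (Fin (n + 1) → Bool) → A) :
    ∑ k, F k = ∑ k : Fin n → Bool, F (Fin.cons true k) + ∑ k : Fin n → Bool, F (Fin.cons false k)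
    := by
  rw [← (Fin.consEquiv (fun _ : Fin (n + 1) => Bool)).sum_comp, Fintype.sum_prod_type]
  simp [Fin.consEquiv]

theorem TT_ofFn (hφ : ∀ g : G, φ g ∈ Subgroup.center G) (F : List M → A) (n : ℕ) :
    ∀ (done : List M) (g : Fin n → G) (m : Fin n → M),
    TT φ F done (List.ofFn fun i => (m i, some (g i))) =
      ∑ k : Fin n → Bool, (-1 : ℤ) ^ wt k • F (done.map (fun x => ract x (PP g k)) ++
        List.ofFn fun i => ract (m i) (gki φ g k i)) := by
  induction n with
  | zero =>
    intro done g m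
    simp [TT_nil, wt, PP, ract_one]
  | succ n ih =>
    intro done g m
    rw [sum_cons, List.ofFn_succ, TT_some, List.map_ofFn, ih]
    have : (actP (φ (g 0)) ∘ fun i : Fin n => (m i.succ, some (g i.succ))) =
      fun i => (ract (m i.succ) (φ (g 0)), some (g i.succ)) := rfl
    rw [this, ih, sub_eq_add_neg, ← Finset.sum_neg_distrib]
    refine Eq.trans ?_ (add_comm _ _)
    congr 1
    · refine Finset.sum_congr rfl fun k _ => ?_
      simp [wt_cons, PP_cons, gki_cons_zero, gki_cons_succ, List.ofFn_succ]
    · refine Finset.sum_congr rfl fun k _ => ?_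
      simp [wt_cons, PP_cons, gki_cons_zero, gki_cons_succ, List.ofFn_succ, ract_ract, pow_add,
        Function.comp_def]

/-- The cocycle as a function on lists. -/
def fh (n : ℕ) (f : CgpG (G := G) (M := M) (n + 2) →+ A) (X : List M) : A :=
  f (QuotientAddGroup.mk' (coinvSub (G := G) (M := M) (n + 2))
    (FreeAbelianGroup.of fun i : Fin (n + 2) => X.getD i 0))

theorem psi_bridge (hφ : ∀ g : G, φ g ∈ Subgroup.center G) (n : ℕ)
    (f : CgpG (G := G) (M := M) (n + 2) →+ A) (g : Fin (n + 2) → G) (m : Fin (n + 2) → M) :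
    f (QuotientAddGroup.mk' (coinvSub (G := G) (M := M) (n + 2)) (psiVal φ (n + 1) (g, m))) =
      TT φ (fh n f) [] ((m 0, none) ::
        List.ofFn fun i : Fin (n + 1) => (m i.succ, some (g i.succ))) := by
  rw [TT_none, TT_ofFn φ hφ, psiVal, Finset.sum_filter, sum_cons]
  simp only [Fin.cons_zero, Bool.true_eq_false, if_false, Finset.sum_const_zero, zero_add,
    if_true, map_sum, map_zsmul]
  refine Finset.sum_congr rfl fun k _ => ?_
  rw [wt_cons]
  simp only [fh]
  congr 4
  · simp
  · congr 2
    funext i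
    refine Fin.cases ?_ (fun i => ?_) i
    · simp [gki_cons_zero]
    · have hi : (i : ℕ) ≤ n := by omega
      simp [gki_cons_succ, -List.ofFn_succ, hi]

theorem fh_inv (n : ℕ) (f : CgpG (G := G) (M := M) (n + 2) →+ A) (g : G) (X : List M) :
    fh n f (X.map (fun x => ract x g)) = fh n f X := by
  unfold fh
  congr 1
  rw [← sub_eq_zero, ← map_sub, QuotientAddGroup.mk'_apply, QuotientAddGroup.eq_zero_iff]
  apply AddSubgroup.subset_closure
  refine ⟨fun i => X.getD i 0, g, ?_⟩
  congr 2
  funext i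
  simp only [List.getD_eq_getElem?_getD, List.getElem?_map]
  cases X[(i : ℕ)]? <;> simp [ract_zero]

theorem mergeL_getD {M : Type*} [AddCommGroup M] (p : ℕ) : ∀ (X : List M) (j : ℕ),
    p + 1 < X.length → (mergeL p X).getD j 0 =
      if j < p then X.getD j 0 else if j = p then X.getD j 0 + X.getD (j + 1) 0
      else X.getD (j + 1) 0 := by
  induction p with
  | zero =>
    rintro (_ | ⟨a, _ | ⟨b, X⟩⟩) j h
    · simp at h
    · simp at h
    · cases j <;> simp [mergeL]
  | succ p ih =>
    rintro (_ | ⟨a, X⟩) j h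
    · simp at h
    · cases j with
      | zero => simp [mergeL]
      | succ j =>
        have := ih X j (by simpa using h)
        simp only [mergeL, List.getD_cons_succ, this]
        simp

theorem fh_cocycle (n : ℕ) (f : CgpG (G := G) (M := M) (n + 2) →+ A)
    (hf : f.comp ((QuotientAddGroup.mk' (coinvSub (G := G) (M := M) (n + 2))).comp
          (dgp (M := M) (n + 2))) = 0) (X : List M) (hX : X.length = n + 3) :
    fh n f X.tail + ∑ p ∈ Finset.range (n + 2), (-1 : ℤ) ^ (p + 1) • fh n f (mergeL p X) +
      (-1 : ℤ) ^ (n + 3) • fh n f X.dropLast = 0 := by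
  have h := DFunLike.congr_fun hf (FreeAbelianGroup.of fun i : Fin (n + 3) => X.getD i 0)
  simp only [AddMonoidHom.comp_apply, dgp, FreeAbelianGroup.lift_apply_of, map_add, map_sum,
    map_zsmul, AddMonoidHom.zero_apply] at h
  rw [Fin.sum_univ_succ] at h
  rw [← h, Finset.sum_range]
  unfold fh
  congr 1
  · congr 1
    · simp only [Fin.val_zero, pow_zero, one_smul]
      congr 3
      funext i
      cases X <;> simp [dMmer]
    · refine Finset.sum_congr rfl fun p _ => ?_
      congr 4
      funext j
      rw [mergeL_getD _ _ _ (by omega)]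
      simp [dMmer]
  · congr 4
    funext j
    have : (j : ℕ) < X.length - 1 := by omega
    have h2 : (j : ℕ) < X.length := by omega
    simp [List.getD_eq_getElem?_getD, this, h2]

theorem fh_norm (n : ℕ) (f : CgpG (G := G) (M := M) (n + 2) →+ A)
    (hf : ∀ z ∈ DgpGsub (G := G) (M := M) (n + 2), f z = 0) (X : List M) (p : ℕ)
    (hp : p < n + 1) (hX : X.getD p 0 = 0) : fh n f X = 0 := by
  apply hf
  refine AddSubgroup.mem_map_of_mem _ (AddSubgroup.subset_closure ?_)
  exact ⟨_, ⟨p, by omega⟩, by simpa using hp, hX, rfl⟩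

theorem TT_van_done (f : List M → A) (p : ℕ) (hf : ∀ X : List M, X.getD p 0 = 0 → f X = 0)
    (L : List (M × Option G)) : ∀ D1 D2 : List M, D1.length = p →
    TT φ f (D1 ++ 0 :: D2) L = 0 := by
  induction L using indL with
  | h0 => intro D1 D2 h; subst h; rw [TT_nil]; exact hf _ (by simp)
  | h1 d L ih =>
    intro D1 D2 h
    have := ih D1 (D2 ++ [d]) h
    simpa [TT_none] using this
  | h2 d g L ih1 ih2 =>
    intro D1 D2 h
    have e1 := ih1 D1 (D2 ++ [d]) h
    have e2 := ih2 (actP (φ g)) (D1.map (fun x => ract x g))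
      (D2.map (fun x => ract x g) ++ [ract d (φ g)]) (by simpa using h)
    simp only [TT_some, List.map_append, List.map_cons, List.append_assoc, List.cons_append,
      ract_zero, e1, e2, sub_zero]

theorem TT_van (f : List M → A) (p : ℕ) (hf : ∀ X : List M, X.getD p 0 = 0 → f X = 0)
    (L1 : List (M × Option G)) :
    ∀ (done : List M) (L2 : List (M × Option G)) (o : Option G), done.length + L1.length = p →
    TT φ f done (L1 ++ (0, o) :: L2) = 0 := by
  induction L1 using indL with
  | h0 =>
    intro done L2 o h
    rcases o with _ | g
    · rw [List.nil_append, TT_none]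
      exact TT_van_done φ f p hf _ _ _ (by simpa using h)
    · rw [List.nil_append, TT_some, ract_zero, TT_van_done φ f p hf _ _ _ (by simpa using h),
        TT_van_done φ f p hf _ _ _ (by simpa using h), sub_zero]
  | h1 e L ih =>
    intro done L2 o h
    simp only [List.cons_append, TT_none]
    exact ih _ L2 o (by simp at h ⊢; omega)
  | h2 e g L ih1 ih2 =>
    intro done L2 o h
    simp only [List.cons_append, TT_some, List.map_append, List.map_cons]
    rw [ih1 _ L2 o (by simp at h ⊢; omega)]
    have := ih2 (actP (φ g)) (done.map (fun x => ract x g) ++ [ract e (φ g)])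
      (L2.map (actP (φ g))) o (by simp at h ⊢; omega)
    simp only [actP, ract_zero] at this ⊢
    rw [this, sub_zero]

/-- Conversion of a word. -/
def cv {G M : Type*} (b : M × G × List G) : M × Option G := (b.1, some b.2.1)

theorem dlm_ofFn {G M : Type*} [AddCommGroup M] (w : List (M × G × List G)) :
    dlm (w.map cv) 0 = List.ofFn fun i : Fin w.length =>
      ((w[(i : ℕ)]).1 - (if h : (i : ℕ) + 1 < w.length then (w[(i : ℕ) + 1]).1 else 0),
        some (w[(i : ℕ)]).2.1) := by
  induction w with
  | nil => simp [dlm]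
  | cons b w ih =>
    simp only [List.map_cons, dlm, ih, List.length_cons, List.ofFn_succ]
    congr 1
    · cases w <;> simp [cv, hdm]
    · congr 1
      funext i
      simp

theorem PhiFX_of (hφ : ∀ g : G, φ g ∈ Subgroup.center G) (n : ℕ)
    (f : CgpG (G := G) (M := M) (n + 2) →+ A) (x : M × G) (w : List (M × G × List G))
    (hl : w.length = n + 1) (hw : ∀ b ∈ w, b.2.2 = []) :
    PhiFX φ n f (FreeAbelianGroup.of (x, w)) = BB φ (fh n f) ((x.1, none) :: w.map cv) := by
  have hw' : ∀ b ∈ w, b.2.2.isEmpty = true := fun b hb => by simp [hw b hb]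
  simp only [PhiFX, AddMonoidHom.comp_apply, projX, gammaMap, psiG, psiFree,
    FreeAbelianGroup.lift_apply_of]
  rw [dif_pos ⟨hl, hw'⟩]
  simp only [FreeAbelianGroup.lift_apply_of]
  rw [psi_bridge φ hφ]
  unfold BB
  simp only [dlm]
  rw [dlm_ofFn]
  congr 2
  · cases w with
    | nil => simp at hl
    | cons b w => simp [hdm, cv]
  · apply List.ext_getElem
    · simp [hl]
    · intro i h1 h2
      rw [List.getElem_ofFn, List.getElem_ofFn]
      simp only [Fin.cons_succ, Fin.val_succ]
      by_cases hi : i + 1 < n + 1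
      · rw [dif_pos (by omega), dif_pos (by omega)]; rfl
      · rw [dif_neg (by omega), dif_neg (by omega)]

theorem PhiFX_of_zero (n : ℕ)
    (f : CgpG (G := G) (M := M) (n + 2) →+ A) (x : M × G) (w : List (M × G × List G))
    (hw : ¬ ∀ b ∈ w, b.2.2 = []) :
    PhiFX φ n f (FreeAbelianGroup.of (x, w)) = 0 := by
  simp only [PhiFX, AddMonoidHom.comp_apply, projX, FreeAbelianGroup.lift_apply_of]
  rw [dif_neg]
  · simp
  · simpa using fun _ => by simpa using hw

theorem PhiFLamX_of (lam : G → A) (n : ℕ)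
    (f : CgpG (G := G) (M := M) (n + 2) →+ A) (z : (M × G) × List (M × G × List G)) :
    PhiFLamX φ lam n f (FreeAbelianGroup.of z) =
      PhiFX φ n f (FreeAbelianGroup.of z) ⊗ₜ[ℤ] lam z.1.2 := by
  simp only [PhiFLamX, PhiFX, AddMonoidHom.comp_apply, projX, FreeAbelianGroup.lift_apply_of]
  split_ifs with h
  · simp [gammaMap, psiLam, psiG, psiFree]
  · simp

theorem lenW_append {G M : Type*} (w1 w2 : List (M × G × List G)) :
    lenW (w1 ++ w2) = lenW w1 + lenW w2 := by simp [lenW]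

theorem lenW_cons {G M : Type*} (b : M × G × List G) (w : List (M × G × List G)) :
    lenW (b :: w) = b.2.2.length + 1 + lenW w := by simp [lenW]

theorem lenW_single {G M : Type*} (w : List (M × G × List G)) (hw : ∀ b ∈ w, b.2.2 = []) :
    lenW w = w.length := by
  induction w with
  | nil => rfl
  | cons b w ih =>
    rw [lenW_cons, ih (fun c hc => hw c (List.mem_cons_of_mem _ hc)), hw b List.mem_cons_self]
    simp; omega

/-- The summand of the boundary at the block `b`. -/
def dTerm (x : M × G) (w1 : List (M × G × List G)) (b : M × G × List G)
    (w2 : List (M × G × List G)) : FreeAbelianGroup ((M × G) × List (M × G × List G)) :=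
  FreeAbelianGroup.of (under φ x (b.1, b.2.1),
      w1.map (fun c => underB φ c (b.1, b.2.1)) ++ tildeB φ b ++
        w2.map fun c => overB φ c (b.1, b.2.1)) +
    ∑ j ∈ Finset.range (b.2.2.length + 1), (-1 : ℤ) ^ (j + 1) •
      FreeAbelianGroup.of (x, w1 ++ blockOfList b.1 ((b.2.1 :: b.2.2).eraseIdx j) ++ w2)

theorem cv_under (m : M) (g : G) (x : M × G) (w : List (M × G × List G)) :
    ((under φ x (m, g)).1, none) :: (w.map (fun c => underB φ c (m, g))).map cv =
      (((x.1, none) :: w.map cv).map (underO φ m g)) := by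
  simp [under, underO, cv, underB]

theorem cv_over (m : M) (g : G) (w : List (M × G × List G)) :
    (w.map (fun c => overB φ c (m, g))).map cv = (w.map cv).map (actP (φ g)) := by
  simp [cv, overB, actP]

theorem single_under (m : M) (g : G) (w : List (M × G × List G)) :
    (∀ b ∈ w.map (fun c => underB φ c (m, g)), b.2.2 = []) ↔ ∀ b ∈ w, b.2.2 = [] := by
  simp only [List.forall_mem_map, underB, List.map_eq_nil_iff]

theorem single_over (m : M) (g : G) (w : List (M × G × List G)) :
    (∀ b ∈ w.map (fun c => overB φ c (m, g)), b.2.2 = []) ↔ ∀ b ∈ w, b.2.2 = [] := by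
  simp only [List.forall_mem_map, overB]

theorem single_append {G M : Type*} (w1 w2 : List (M × G × List G)) :
    (∀ b ∈ w1 ++ w2, b.2.2 = []) ↔ (∀ b ∈ w1, b.2.2 = []) ∧ ∀ b ∈ w2, b.2.2 = [] := by
  simp only [List.mem_append, or_imp, forall_and]

theorem term_good (hφ : ∀ g : G, φ g ∈ Subgroup.center G) (n : ℕ)
    (f : CgpG (G := G) (M := M) (n + 2) →+ A) (x : M × G) (w1 w2 : List (M × G × List G))
    (b : M × G × List G) (hl : lenW (w1 ++ b :: w2) = n + 2)
    (hw : ∀ c ∈ w1 ++ b :: w2, c.2.2 = []) :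
    PhiFX φ n f (dTerm φ x w1 b w2) =
      - BB φ (fun X => fh n f (mergeL w1.length X)) ((x.1, none) :: (w1 ++ b :: w2).map cv) := by
  rw [lenW_single _ hw] at hl
  obtain ⟨m, g, gs⟩ := b
  have hgs : gs = [] := hw (m, g, gs) (by simp)
  subst hgs
  rw [single_append] at hw
  have hw1 := hw.1
  have hw2 : ∀ c ∈ w2, c.2.2 = [] := fun c hc => hw.2 c (List.mem_cons_of_mem _ hc)
  simp only [List.length_append, List.length_cons] at hl
  obtain ⟨l, y, hy⟩ : ∃ l y, (x.1, none) :: w1.map cv = l ++ [y] :=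
    ⟨_, _, (List.dropLast_append_getLast (List.cons_ne_nil _ _)).symm⟩
  have hlen : l.length = w1.length := by
    have := congrArg List.length hy
    simpa using this.symm
  have key := BB_merge φ hφ (fh n f) l (w2.map cv) y.1 m y.2 g
  have e1 : (x.1, none) :: (w1 ++ (m, g, []) :: w2).map cv =
      l ++ (y.1, y.2) :: (m, some g) :: w2.map cv := by
    rw [List.map_append, ← List.cons_append, hy]; simp [cv]
  rw [e1, ← hlen, key]
  simp only [dTerm, tildeB, List.append_nil, List.length_nil, zero_add, Finset.range_one,
    Finset.sum_singleton, List.eraseIdx_zero, List.tail_cons, blockOfList, map_add, map_zsmul]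
  rw [PhiFX_of φ hφ, PhiFX_of φ hφ]
  · have e2 : (x.1, none) :: (w1 ++ w2).map cv = l ++ (y.1, y.2) :: w2.map cv := by
      rw [List.map_append, ← List.cons_append, hy]; simp
    rw [List.map_append, ← List.cons_append, cv_under, cv_over, hy, e2]
    simp only [pow_one, neg_smul, one_smul]
    abel
  · simp; omega
  · rw [single_append]; exact ⟨hw1, hw2⟩
  · simp; omega
  · rw [single_append, single_under, single_over]; exact ⟨hw1, hw2⟩

theorem term_bad (hφ : ∀ g : G, φ g ∈ Subgroup.center G) (n : ℕ)
    (f : CgpG (G := G) (M := M) (n + 2) →+ A) (x : M × G) (w1 w2 : List (M × G × List G))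
    (b : M × G × List G) (hl : lenW (w1 ++ b :: w2) = n + 2)
    (hw : ¬ ∀ c ∈ w1 ++ b :: w2, c.2.2 = []) :
    PhiFX φ n f (dTerm φ x w1 b w2) = 0 := by
  by_cases h12 : (∀ c ∈ w1, c.2.2 = []) ∧ ∀ c ∈ w2, c.2.2 = []
  · obtain ⟨h1, h2⟩ := h12
    obtain ⟨m, g, gs⟩ := b
    rcases gs with _ | ⟨h, hs⟩
    · exact absurd (by rw [single_append]; exact ⟨h1, by simpa using h2⟩) hw
    rcases hs with _ | ⟨h', hs⟩
    · rw [lenW_append, lenW_cons, lenW_single _ h1, lenW_single _ h2] at hl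
      simp only [List.length_cons, List.length_nil] at hl
      have key := BB_double φ hφ (fh n f) ((x.1, none) :: w1.map cv) (w2.map cv) m g h
      simp only [dTerm, tildeB, List.length_cons, List.length_nil, zero_add,
        Finset.sum_range_succ, Finset.sum_range_zero, List.eraseIdx_cons_succ,
        List.eraseIdx_cons_zero, blockOfList, map_add, map_zsmul, List.map_nil, List.append_assoc,
        List.cons_append, List.nil_append]
      rw [PhiFX_of φ hφ, PhiFX_of φ hφ, PhiFX_of φ hφ]
      · have e : List.map cv ((ract m (φ g), g⁻¹ * h, []) ::
            w2.map (fun c => overB φ c (m, g))) =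
            (ract m (φ g), some (g⁻¹ * h)) :: (w2.map cv).map (actP (φ g)) := by
          rw [List.map_cons, cv_over]; rfl
        rw [← key, List.map_append, ← List.cons_append, cv_under, e]
        have e3 : ((-1 : ℤ) ^ (1 + 1)) = 1 := by norm_num
        simp only [List.map_append, List.map_cons, cv, pow_one, neg_smul, one_smul, e3,
          List.cons_append, zero_add]
        abel
      · simp; omega
      · rw [single_append]; exact ⟨h1, by simpa using h2⟩
      · simp; omega
      · rw [single_append]; exact ⟨h1, by simpa using h2⟩
      · simp; omega
      · rw [single_append, single_under]; refine ⟨h1, ?_⟩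
        rw [List.forall_mem_cons, single_over]; exact ⟨rfl, h2⟩
    · simp only [dTerm, map_add, map_sum, map_zsmul]
      rw [PhiFX_of_zero, Finset.sum_eq_zero, add_zero]
      · intro j hj
        rw [PhiFX_of_zero, smul_zero]
        rw [single_append, single_append]
        rintro ⟨⟨_, hc⟩, _⟩
        rcases j with _ | _ | j <;> simp [blockOfList] at hc
      · rw [single_append, single_append]
        rintro ⟨⟨_, hc⟩, _⟩
        simp [tildeB] at hc
  · simp only [dTerm, map_add, map_sum, map_zsmul]
    rw [PhiFX_of_zero, Finset.sum_eq_zero, add_zero]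
    · intro j hj
      rw [PhiFX_of_zero, smul_zero]
      rw [single_append, single_append]
      tauto
    · rw [single_append, single_append, single_under, single_over]
      tauto

theorem dPXval_eq (x : M × G) (w : List (M × G × List G)) :
    dPXval φ (x, w) = ∑ i ∈ (Finset.range w.length).attach,
      (-1 : ℤ) ^ lenW (w.take (i : ℕ)) •
        dTerm φ x (w.take (i : ℕ)) (w[(i : ℕ)]'(Finset.mem_range.mp i.2))
          (w.drop ((i : ℕ) + 1)) := rfl

theorem BB_cocycle (hφ : ∀ g : G, φ g ∈ Subgroup.center G) (n : ℕ)
    (f : CgpG (G := G) (M := M) (n + 2) →+ A)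
    (hf : f.comp ((QuotientAddGroup.mk' (coinvSub (G := G) (M := M) (n + 2))).comp
          (dgp (M := M) (n + 2))) = 0) (x : M) (w : List (M × G × List G))
    (hw : w.length = n + 2) :
    ∑ p ∈ Finset.range (n + 2), (-1 : ℤ) ^ (p + 1) •
      BB φ (fun X => fh n f (mergeL p X)) ((x, none) :: w.map cv) = 0 := by
  have h0 : BB φ (fun X => fh n f X.tail +
      ∑ p ∈ Finset.range (n + 2), (-1 : ℤ) ^ (p + 1) • fh n f (mergeL p X) +
      (-1 : ℤ) ^ (n + 3) • fh n f X.dropLast) ((x, none) :: w.map cv) = 0 := by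
    unfold BB
    rw [TT_congr φ _ (fun _ => (0 : A)), TT_zero]
    intro X hX
    apply fh_cocycle n f hf
    rw [hX, length_dlm]; simp [hw]
  have h1 : BB φ (fun X => fh n f X.tail) ((x, none) :: w.map cv) = 0 := by
    rcases w with _ | ⟨b, w⟩
    · simp at hw
    · exact BB_tail φ hφ _ (fh_inv n f) _ _ _ _
  have h2 : BB φ (fun X => fh n f X.dropLast) ((x, none) :: w.map cv) = 0 := by
    have hne : w ≠ [] := by rintro rfl; simp at hw
    rw [← List.dropLast_append_getLast hne, List.map_append, ← List.cons_append]
    exact BB_dropLast φ hφ _ (fh_inv n f) _ _ _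
  unfold BB at *
  rw [TT_add, TT_add, TT_smul, h1, h2, TT_sum] at h0
  simpa [TT_smul] using h0

theorem PhiFX_dPXval (hφ : ∀ g : G, φ g ∈ Subgroup.center G) (n : ℕ)
    (f : CgpG (G := G) (M := M) (n + 2) →+ A)
    (hf : f.comp ((QuotientAddGroup.mk' (coinvSub (G := G) (M := M) (n + 2))).comp
          (dgp (M := M) (n + 2))) = 0) (x : M × G) (w : List (M × G × List G))
    (hl : lenW w = n + 2) : PhiFX φ n f (dPXval φ (x, w)) = 0 := by
  have hsplit : ∀ (i : ℕ) (hi : i < w.length), w.take i ++ w[i] :: w.drop (i + 1) = w := by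
    intro i hi
    rw [List.getElem_cons_drop, List.take_append_drop]
  rw [dPXval_eq, map_sum]
  by_cases hw : ∀ c ∈ w, c.2.2 = []
  · have hlen : w.length = n + 2 := by rw [← lenW_single w hw, hl]
    rw [← BB_cocycle φ hφ n f hf x.1 w hlen, ← hlen, ← Finset.sum_attach (Finset.range w.length)]
    refine Finset.sum_congr rfl fun i _ => ?_
    have hi := Finset.mem_range.mp i.2
    have hs := hsplit i hi
    rw [map_zsmul, term_good φ hφ n f x _ _ _ (by rw [hs, hl]) (by rw [hs]; exact hw), hs,
      lenW_single _ (fun c hc => hw c (List.mem_of_mem_take hc)), List.length_take,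
      min_eq_left hi.le, pow_succ]
    simp
  · refine Finset.sum_eq_zero fun i _ => ?_
    have hs := hsplit i (Finset.mem_range.mp i.2)
    rw [map_zsmul, term_bad φ hφ n f x _ _ _ (by rw [hs, hl]) (by rw [hs]; exact hw), smul_zero]

theorem PhiFX_D (hφ : ∀ g : G, φ g ∈ Subgroup.center G) (n : ℕ)
    (f : CgpG (G := G) (M := M) (n + 2) →+ A)
    (hf : ∀ z ∈ DgpGsub (G := G) (M := M) (n + 2), f z = 0)
    (x : M × G) (w1 w2 : List (M × G × List G)) (m : M) (g h : G) (gs hs : List G)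
    (hl : lenW (w1 ++ (m, g, gs) :: (m, h, hs) :: w2) = n + 1) :
    PhiFX φ n f (FreeAbelianGroup.of (x, w1 ++ (m, g, gs) :: (m, h, hs) :: w2) -
          mergeExpandX x m (g :: gs) (h :: hs) w1 w2) = 0 := by
  have e1 : PhiFX φ n f (mergeExpandX x m (g :: gs) (h :: hs) w1 w2) = 0 := by
    rw [mergeExpandX, map_sum]
    refine Finset.sum_eq_zero fun T _ => ?_
    rw [map_zsmul, PhiFX_of_zero, smul_zero]
    intro hc
    have := hc _ (List.mem_append_right _ List.mem_cons_self)
    have := congrArg List.length this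
    simp at this
  rw [map_sub, e1, sub_zero]
  by_cases hw : ∀ c ∈ w1 ++ (m, g, gs) :: (m, h, hs) :: w2, c.2.2 = []
  · rw [lenW_single _ hw] at hl
    rw [PhiFX_of φ hφ n f _ _ hl hw, BB, List.map_append, ← List.cons_append, dlm_append]
    simp only [List.map_cons, dlm, hdm_cons]
    have e2 : (cv (m, g, gs)).1 - (cv (m, h, hs)).1 = 0 := by simp [cv]
    rw [e2]
    refine TT_van φ _ (w1.length + 1) ?_ _ _ _ _ (by simp [length_dlm])
    intro X hX
    refine fh_norm n f hf X _ ?_ hX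
    simp at hl
    omega
  · exact PhiFX_of_zero φ n f _ _ hw

theorem lam_conj (lam : G → A) (hlam : ∀ g h : G, lam (g * h) = lam g + lam h) (g h : G) :
    lam (h⁻¹ * g * h) = lam g := by
  have h1 : lam 1 = 0 := by simpa using hlam 1 1
  have h2 := hlam h⁻¹ h
  rw [inv_mul_cancel, h1] at h2
  rw [hlam, hlam, add_right_comm, ← h2, zero_add]

/-- The subgroup on which the twisted map is determined by the untwisted one. -/
noncomputable def SS (lam : G → A) (n : ℕ) (f : CgpG (G := G) (M := M) (n + 2) →+ A) (a : A) :
    AddSubgroup (FreeAbelianGroup ((M × G) × List (M × G × List G))) :=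
  (PhiFLamX φ lam n f).eqLocus
    (((TensorProduct.mk ℤ A A).flip a).toAddMonoidHom.comp (PhiFX φ n f))

theorem mem_SS_of (lam : G → A) (n : ℕ) (f : CgpG (G := G) (M := M) (n + 2) →+ A) (a : A)
    (z : (M × G) × List (M × G × List G)) (hz : lam z.1.2 = a) :
    FreeAbelianGroup.of z ∈ SS φ lam n f a := by
  subst hz
  exact PhiFLamX_of φ lam n f z

theorem SS_zero (lam : G → A) (n : ℕ) (f : CgpG (G := G) (M := M) (n + 2) →+ A) (a : A)
    (z : FreeAbelianGroup ((M × G) × List (M × G × List G))) (hz : z ∈ SS φ lam n f a)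
    (h : PhiFX φ n f z = 0) : PhiFLamX φ lam n f z = 0 := by
  have h1 : PhiFLamX φ lam n f z = PhiFX φ n f z ⊗ₜ[ℤ] a := hz
  rw [h1, h, TensorProduct.zero_tmul]

theorem mem_SS_D (lam : G → A) (n : ℕ) (f : CgpG (G := G) (M := M) (n + 2) →+ A)
    (x : M × G) (w w1 w2 : List (M × G × List G)) (m : M) (la lb : List G) :
    FreeAbelianGroup.of (x, w) - mergeExpandX x m la lb w1 w2 ∈ SS φ lam n f (lam x.2) := by
  refine AddSubgroup.sub_mem _ (mem_SS_of φ lam n f (lam x.2) (x, w) rfl) ?_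
  unfold mergeExpandX
  refine AddSubgroup.sum_mem _ fun T _ => AddSubgroup.zsmul_mem _ ?_ _
  apply mem_SS_of
  rfl

theorem mem_SS_T (lam : G → A) (hlam : ∀ g h : G, lam (g * h) = lam g + lam h) (n : ℕ)
    (f : CgpG (G := G) (M := M) (n + 2) →+ A) (x : M × G) (w1 w2 : List (M × G × List G))
    (b : M × G × List G) :
    dTerm φ x w1 b w2 ∈ SS φ lam n f (lam x.2) := by
  unfold dTerm
  refine AddSubgroup.add_mem _ ?_ ?_
  · apply mem_SS_of
    exact lam_conj lam hlam _ _
  · refine AddSubgroup.sum_mem _ fun T _ => AddSubgroup.zsmul_mem _ ?_ _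
    apply mem_SS_of
    rfl

theorem mem_SS_P (lam : G → A) (hlam : ∀ g h : G, lam (g * h) = lam g + lam h) (n : ℕ)
    (f : CgpG (G := G) (M := M) (n + 2) →+ A) (x : M × G) (w : List (M × G × List G)) :
    dPXval φ (x, w) ∈ SS φ lam n f (lam x.2) := by
  rw [dPXval_eq]
  exact AddSubgroup.sum_mem _ fun i _ => AddSubgroup.zsmul_mem _ (mem_SS_T φ lam hlam n f _ _ _ _) _

/-- Let `n ≥ 1` (encoded as `n+1` below), `λ : G → A` a group homomorphism
and `f : C^{gp}_{n+1}(M;ℤ)_G → A` a normalized group `(n+1)`-cocycle.  Then both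
`Φ_f = f ∘ ψ_n ∘ γ_n ∘ proj_n` and `Φ_{f,λ} = (f ⊗ id_A) ∘ ψ_{n,λ} ∘ γ_n ∘ proj_n` vanish
on `D_n(X;ℤ)_X` and kill the boundaries of `P_{n+1}(X;ℤ)_X`; that is, they define
`n`-cocycles of the `G`-Alexander multiple conjugation biquandle with `X`-set `X`. -/
theorem mcbX_cocycles_of_normalized_group_cocycle
    (hφ : ∀ g : G, φ g ∈ Subgroup.center G)
    (lam : G → A) (hlam : ∀ g h : G, lam (g * h) = lam g + lam h) :
    ∀ (n : ℕ) (f : CgpG (G := G) (M := M) (n + 2) →+ A),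
      (∀ z ∈ DgpGsub (G := G) (M := M) (n + 2), f z = 0) →
      f.comp ((QuotientAddGroup.mk' (coinvSub (G := G) (M := M) (n + 2))).comp
          (dgp (M := M) (n + 2))) = 0 →
      (∀ z ∈ DsubX (G := G) (M := M) (n + 1), PhiFX φ n f z = 0) ∧
        (∀ z ∈ PsubX (G := G) (M := M) (n + 2), PhiFX φ n f (dPX φ z) = 0) ∧
        (∀ z ∈ DsubX (G := G) (M := M) (n + 1), PhiFLamX φ lam n f z = 0) ∧
        (∀ z ∈ PsubX (G := G) (M := M) (n + 2), PhiFLamX φ lam n f (dPX φ z) = 0) := by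

  intro n f hD hf
  refine ⟨fun z hz => ?_, fun z hz => ?_, fun z hz => ?_, fun z hz => ?_⟩
  · refine (AddSubgroup.closure_le (PhiFX φ n f).ker).2 ?_ hz
    rintro _ ⟨x, w1, w2, m, g, gs, h, hs, hl, rfl⟩
    exact PhiFX_D φ hφ n f hD x w1 w2 m g h gs hs hl
  · refine (AddSubgroup.closure_le ((PhiFX φ n f).comp (dPX φ)).ker).2 ?_ hz
    rintro _ ⟨⟨x, w⟩, hl, rfl⟩
    change PhiFX φ n f (dPX φ _) = 0
    rw [dPX, FreeAbelianGroup.lift_apply_of]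
    exact PhiFX_dPXval φ hφ n f hf x w hl
  · refine (AddSubgroup.closure_le (PhiFLamX φ lam n f).ker).2 ?_ hz
    rintro _ ⟨x, w1, w2, m, g, gs, h, hs, hl, rfl⟩
    exact SS_zero φ lam n f _ _ (mem_SS_D φ lam n f _ _ _ _ _ _ _)
      (PhiFX_D φ hφ n f hD x w1 w2 m g h gs hs hl)
  · refine (AddSubgroup.closure_le ((PhiFLamX φ lam n f).comp (dPX φ)).ker).2 ?_ hz
    rintro _ ⟨⟨x, w⟩, hl, rfl⟩
    change PhiFLamX φ lam n f (dPX φ _) = 0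
    rw [dPX, FreeAbelianGroup.lift_apply_of]
    exact SS_zero φ lam n f _ _ (mem_SS_P φ lam hlam n f _ _) (PhiFX_dPXval φ hφ n f hf x w hl)

end GAlex
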